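/- arXiv:1903.07514 — 2 statements merged into one kernel-verified Lean document; each statement's English description precedes it below -/
import Mathlib

section
/- Let A be a commutative Noetherian local ring and M a nonzero finitely generated A-module of finite injective dimension. Then injdim M = depth A (Bass formula combined with the fact that injective dimension of a finitely generated module of finite injective dimension equals the depth of the ring). -/
/-!
Write `k` for the residue field and `n` for the injective dimension of `M`. Then `Ext^n(k, M) ≠ 0`:
otherwise `Ext^n(-, M)` vanishes on all finitely generated modules by induction along prime
filtrations, which contradicts the choice of `n`. Indeed, for a prime `p` other than the maximal
ideal `m`, an element `x` of `m` outside `p` is regular on `A ⧸ p`, and the vanishing of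
`Ext^(n+1)(A ⧸ (p + (x)), M)` forces `Ext^n(A ⧸ p, M) = x • Ext^n(A ⧸ p, M)`, which is zero by
Nakayama.

Let `rs` be an `A`-regular sequence in `m` and put `Q = A ⧸ (rs)`. The same use of
Nakayama propagates the non-vanishing of `Ext^0(A, M) = M` to `Ext^(length rs)(Q, M)`, so
`length rs ≤ n`. If `length rs < n`, then `Ext^n(Q, M) = 0` because `Q` has projective dimension
`length rs`. Since `Ext^n(-, M)` is right exact, `k` cannot embed in `Q`, hence `m` contains
a `Q`-regular element and `rs` can be extended.
-/

open CategoryTheory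

/-- The `n`-th Ext group of `M` and `N` over `R`. -/
noncomputable def extModule (R : Type) [CommRing R] (M N : ModuleCat R) (n : ℕ) :
    ModuleCat R :=
  ((Ext R (ModuleCat R) n).obj (Opposite.op M)).obj N

/-- Injective dimension: the least `n` such that `Ext^i(-, M)` vanishes for all
`i > n`. -/
noncomputable def injDim (R : Type) [CommRing R] (M : ModuleCat R) : ℕ∞ :=
  sInf {n : ℕ∞ | ∀ (N : ModuleCat R) (i : ℕ), n < (i : ℕ∞) →
    Subsingleton (extModule R N M i)}

/-- The depth of a module over a local ring. -/
noncomputable def depth (R : Type) [CommRing R] [IsLocalRing R]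
    (M : Type) [AddCommGroup M] [Module R M] : ℕ∞ :=
  sSup {n : ℕ∞ | ∃ rs : List R, (rs.length : ℕ∞) = n ∧
    (∀ x ∈ rs, x ∈ IsLocalRing.maximalIdeal R) ∧ RingTheory.Sequence.IsRegular M rs}

universe w v u

open Limits IsLocalRing RingTheory.Sequence

section Abelian

variable {C : Type u} [Category.{v} C] [Abelian C]

lemma isZero_extFunctor_obj_succ_iff (R : Type*) [Ring R] [Linear R C] [EnoughProjectives C]
    [HasExt.{w} C] (X Y : C) (n : ℕ) :
    IsZero (((Ext R C (n + 1)).obj (Opposite.op X)).obj Y) ↔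
      Subsingleton (Abelian.Ext X Y (n + 1)) := by
  let P : ProjectiveResolution X := ProjectiveResolution.of X
  have exactAt_iff : IsZero (((Ext R C (n + 1)).obj (Opposite.op X)).obj Y) ↔
      (P.complex.linearYonedaObj R Y).ExactAt (n + 1) := by
    rw [HomologicalComplex.exactAt_iff_isZero_homology]
    exact (P.isoExt (R := R) (n + 1) Y).isZero_iff
  rw [exactAt_iff, HomologicalComplex.exactAt_iff' _ n (n + 1) (n + 2) (by simp) (by simp),
    ShortComplex.moduleCat_exact_iff]
  constructor
  · refine fun exact ↦ subsingleton_of_forall_eq 0 fun α ↦ ?_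
    obtain ⟨f, hf, rfl⟩ := P.extMk_surjective α (n + 2) rfl
    exact (P.extMk_eq_zero_iff f (n + 2) rfl hf n rfl).2 (exact f hf)
  · exact fun _ f hf ↦ (P.extMk_eq_zero_iff f (n + 2) rfl hf n rfl).1 (Subsingleton.elim _ _)

variable [HasExt.{w} C]

lemma subsingleton_ext_congr {X X' : C} (e : X ≅ X') (Y : C) (n : ℕ) :
    Subsingleton (Abelian.Ext X Y n) ↔ Subsingleton (Abelian.Ext X' Y n) :=
  (((Abelian.extFunctor n).mapIso e.symm.op).app Y).addCommGroupIsoToAddEquiv.subsingleton_congr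

lemma subsingleton_ext_of_isZero {X : C} (hX : IsZero X) (Y : C) (n : ℕ) :
    Subsingleton (Abelian.Ext X Y n) :=
  have := hX.hasProjectiveDimensionLT_zero
  HasProjectiveDimensionLT.subsingleton X 0 n n.zero_le Y

lemma subsingleton_ext_X₂ {S : ShortComplex C} (hS : S.ShortExact) (Y : C) (n : ℕ)
    (h₁ : Subsingleton (Abelian.Ext S.X₁ Y n)) (h₃ : Subsingleton (Abelian.Ext S.X₃ Y n)) :
    Subsingleton (Abelian.Ext S.X₂ Y n) := by
  refine subsingleton_of_forall_eq 0 fun α ↦ ?_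
  obtain ⟨β, rfl⟩ := Abelian.Ext.contravariant_sequence_exact₂ hS Y α (Subsingleton.elim _ _)
  rw [Subsingleton.elim β 0, Abelian.Ext.comp_zero]

lemma subsingleton_ext_of_mono {X X' : C} (f : X ⟶ X') [Mono f] (Y : C) (n : ℕ)
    [HasInjectiveDimensionLE Y n] (h : Subsingleton (Abelian.Ext X' Y n)) :
    Subsingleton (Abelian.Ext X Y n) := by
  have hS : (ShortComplex.mk f (cokernel.π f) (cokernel.condition f)).ShortExact :=
    { exact := ShortComplex.exact_cokernel f }
  refine subsingleton_of_forall_eq 0 fun α ↦ ?_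
  obtain ⟨β, rfl⟩ := Abelian.Ext.contravariant_sequence_exact₁ hS Y α (add_comm 1 n)
    (Abelian.Ext.eq_zero_of_hasInjectiveDimensionLT _ (n + 1) le_rfl)
  rw [Subsingleton.elim (α := Abelian.Ext X' Y n) β 0, Abelian.Ext.comp_zero]

end Abelian

section Ring

variable {R : Type u} [Ring R]

lemma subsingleton_ext_self_zero_iff (M : ModuleCat.{u} R) :
    Subsingleton (Abelian.Ext (ModuleCat.of R R) M 0) ↔ Subsingleton M :=
  (Abelian.Ext.addEquiv₀.trans (ModuleCat.homAddEquiv.trans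
    (LinearMap.ringLmapEquivSelf R ℕ M).toAddEquiv)).subsingleton_congr

lemma injective_of_subsingleton_ext_one_quotient (M : ModuleCat.{u} R)
    (h : ∀ I : Ideal R, Subsingleton (Abelian.Ext (ModuleCat.of R (R ⧸ I)) M 1)) :
    Injective M := by
  rw [← Module.injective_iff_injective_object, ← Module.Baer.iff_injective]
  intro I g
  let S : ShortComplex (ModuleCat.{u} R) :=
    ModuleCat.shortComplexOfCompEqZero I.subtype I.mkQ
      (LinearMap.exact_subtype_mkQ I).linearMap_comp_eq_zero
  have hS : S.ShortExact := ModuleCat.shortComplex_shortExact S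
    (LinearMap.exact_subtype_mkQ I) I.subtype_injective I.mkQ_surjective
  obtain ⟨α, hα⟩ := Abelian.Ext.contravariant_sequence_exact₁ hS M
    (Abelian.Ext.mk₀ (ModuleCat.ofHom g)) (zero_add 1)
    (Subsingleton.elim (h := h I) _ _)
  obtain ⟨φ, rfl⟩ := Abelian.Ext.homEquiv₀.symm.surjective α
  have extends_g : S.f ≫ φ = ModuleCat.ofHom g :=
    Abelian.Ext.homEquiv₀.symm.injective (by simpa using hα)
  exact ⟨φ.hom, fun x hx ↦ congr($extends_g ⟨x, hx⟩)⟩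

lemma hasInjectiveDimensionLT_of_subsingleton_ext_quotient (M : ModuleCat.{u} R) (n : ℕ)
    (h : ∀ I : Ideal R, Subsingleton (Abelian.Ext (ModuleCat.of R (R ⧸ I)) M n)) :
    HasInjectiveDimensionLT M n := by
  match n with
  | 0 =>
    rw [hasInjectiveDimensionLT_zero_iff_isZero, ModuleCat.isZero_iff_subsingleton,
      ← subsingleton_ext_self_zero_iff]
    exact (subsingleton_ext_congr (Submodule.quotEquivOfEqBot _ rfl).toModuleIso M 0).1 (h ⊥)
  | 1 =>
    rw [← injective_iff_hasInjectiveDimensionLT_one]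
    exact injective_of_subsingleton_ext_one_quotient M h
  | n + 2 =>
    let ⟨J, _, f, _⟩ := EnoughInjectives.presentation M
    have hS : (ShortComplex.mk f (cokernel.π f) (cokernel.condition f)).ShortExact :=
      { exact := ShortComplex.exact_cokernel f }
    rw [← hS.hasInjectiveDimensionLT_X₃_iff n ‹_›]
    refine hasInjectiveDimensionLT_of_subsingleton_ext_quotient _ (n + 1) fun I ↦
      subsingleton_of_forall_eq 0 fun α ↦ ?_
    obtain ⟨β, rfl⟩ := Abelian.Ext.covariant_sequence_exact₃ _ hS α rfl
      (Subsingleton.elim (h := h I) _ _)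
    rw [Abelian.Ext.eq_zero_of_injective (I := J) β, Abelian.Ext.zero_comp]

end Ring

section IsLocalRing

variable {R : Type u} [CommRing R] [IsNoetherianRing R] [IsLocalRing R]

lemma subsingleton_ext_of_quotSMulTop [Small.{v} R] (N M : ModuleCat.{v} R) [Module.Finite R N]
    [Module.Finite R M] {x : R} (hx : x ∈ maximalIdeal R) (reg : IsSMulRegular N x) (n : ℕ)
    (h : Subsingleton (Abelian.Ext (ModuleCat.of R (QuotSMulTop x N)) M (n + 1))) :
    Subsingleton (Abelian.Ext N M n) := by
  have mk₀_smul_comp (β : Abelian.Ext N M n) :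
      (Abelian.Ext.mk₀ (x • 𝟙 N)).comp β (zero_add n) = x • β := by
    rw [Abelian.Ext.mk₀_smul, Abelian.Ext.smul_comp, Abelian.Ext.mk₀_id_comp]
  have smul_surjective (α : Abelian.Ext N M n) : ∃ β : Abelian.Ext N M n, x • β = α := by
    obtain ⟨β, hβ⟩ := Abelian.Ext.contravariant_sequence_exact₁ reg.smulShortComplex_shortExact M α
      (add_comm 1 n) (Subsingleton.elim (h := h) _ _)
    exact ⟨β, (mk₀_smul_comp β).symm.trans hβ⟩
  by_contra nontrivial
  rw [not_subsingleton_iff_nontrivial] at nontrivial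
  refine Submodule.top_ne_pointwise_smul_of_mem_jacobson_annihilator
    (maximalIdeal_le_jacobson (Module.annihilator R (Abelian.Ext N M n)) hx)
    (eq_top_iff.2 fun α _ ↦ ?_).symm
  obtain ⟨β, rfl⟩ := smul_surjective α
  exact Submodule.smul_mem_pointwise_smul _ _ ⊤ trivial

lemma subsingleton_ext_of_isWeaklyRegular [Small.{v} R] (N M : ModuleCat.{v} R)
    [Module.Finite R N] [Module.Finite R M] (rs : List R) (mem : ∀ r ∈ rs, r ∈ maximalIdeal R)
    (reg : IsWeaklyRegular N rs) (n : ℕ)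
    (h : Subsingleton (Abelian.Ext
      (ModuleCat.of R (N ⧸ Ideal.ofList rs • (⊤ : Submodule R N))) M (n + rs.length))) :
    Subsingleton (Abelian.Ext N M n) := by
  induction rs generalizing N n with
  | nil =>
    exact (subsingleton_ext_congr
      (Submodule.quotEquivOfEqBot _ (by simp)).toModuleIso M n).1 h
  | cons x rs ih =>
    simp only [List.mem_cons, forall_eq_or_imp] at mem
    rw [isWeaklyRegular_cons_iff] at reg
    refine subsingleton_ext_of_quotSMulTop N M mem.1 reg.1 n
      (ih (ModuleCat.of R (QuotSMulTop x N)) mem.2 reg.2 (n + 1) ?_)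
    rw [add_right_comm, add_assoc]
    exact (subsingleton_ext_congr
      (Submodule.quotOfListConsSMulTopEquivQuotSMulTopInner N x rs).toModuleIso M _).1 h

lemma length_le_of_hasInjectiveDimensionLE (M : ModuleCat.{u} R) [Module.Finite R M]
    [Nontrivial M] (n : ℕ) [HasInjectiveDimensionLE M n] (rs : List R)
    (mem : ∀ r ∈ rs, r ∈ maximalIdeal R) (reg : IsWeaklyRegular R rs) : rs.length ≤ n := by
  by_contra! hlt
  refine not_subsingleton M ((subsingleton_ext_self_zero_iff M).1
    (subsingleton_ext_of_isWeaklyRegular (ModuleCat.of R R) M rs mem reg 0 ?_))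
  exact HasInjectiveDimensionLT.subsingleton M (n + 1) _ (by lia) _

lemma subsingleton_ext_of_subsingleton_ext_residueField (M : ModuleCat.{u} R) [Module.Finite R M]
    (n : ℕ) [HasInjectiveDimensionLE M n]
    (hk : Subsingleton (Abelian.Ext (ModuleCat.of R (R ⧸ maximalIdeal R)) M n))
    (N : Type u) [AddCommGroup N] [Module R N] (hN : Module.Finite R N) :
    Subsingleton (Abelian.Ext (ModuleCat.of R N) M n) := by
  induction hN using IsNoetherianRing.induction_on_isQuotientEquivQuotientPrime R with
  | subsingleton N =>
    exact subsingleton_ext_of_isZero (ModuleCat.isZero_of_subsingleton _) M n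
  | quotient N p e =>
    rw [subsingleton_ext_congr e.toModuleIso]
    by_cases hp : p.1 = maximalIdeal R
    · rwa [hp]
    · obtain ⟨x, hx, hxp⟩ := SetLike.exists_of_lt ((le_maximalIdeal p.2.ne_top).lt_of_ne hp)
      have reg : IsSMulRegular (R ⧸ p.1) x :=
        (isSMulRegular_quotient_iff_mem_of_smul_mem p.1 x).2 fun _ hy ↦
          (p.2.mem_or_mem hy).resolve_left hxp
      exact subsingleton_ext_of_quotSMulTop (ModuleCat.of R (R ⧸ p.1)) M hx reg n
        (HasInjectiveDimensionLT.subsingleton M (n + 1) _ le_rfl _)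
  | exact N₁ N₂ N₃ f g hf hg hfg h₁ h₃ =>
    exact subsingleton_ext_X₂ (ModuleCat.shortComplex_shortExact
      (ModuleCat.shortComplexOfCompEqZero f g hfg.linearMap_comp_eq_zero) hfg hf hg) M n h₁ h₃

lemma hasInjectiveDimensionLT_of_subsingleton_ext_residueField (M : ModuleCat.{u} R)
    [Module.Finite R M] (n : ℕ) [HasInjectiveDimensionLE M n]
    (hk : Subsingleton (Abelian.Ext (ModuleCat.of R (R ⧸ maximalIdeal R)) M n)) :
    HasInjectiveDimensionLT M n :=
  hasInjectiveDimensionLT_of_subsingleton_ext_quotient M n fun _ ↦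
    subsingleton_ext_of_subsingleton_ext_residueField M n hk _ inferInstance

lemma subsingleton_residueField_linearMap_of_subsingleton_ext (M Q : ModuleCat.{u} R)
    [Module.Finite R M] (n : ℕ) [HasInjectiveDimensionLE M n] (hM : ¬ HasInjectiveDimensionLT M n)
    (hQ : Subsingleton (Abelian.Ext Q M n)) : Subsingleton ((R ⧸ maximalIdeal R) →ₗ[R] Q) := by
  refine subsingleton_of_forall_eq 0 fun f ↦ by_contra fun f_ne_zero ↦ hM ?_
  have : IsSimpleModule R (R ⧸ maximalIdeal R) :=
    isSimpleModule_iff_isCoatom.2 (maximalIdeal.isMaximal R).out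
  have : Mono (ModuleCat.ofHom f) :=
    (ModuleCat.mono_iff_injective _).2 (LinearMap.injective_of_ne_zero f_ne_zero)
  exact hasInjectiveDimensionLT_of_subsingleton_ext_residueField M n
    (subsingleton_ext_of_mono (ModuleCat.ofHom f) M n hQ)

lemma exists_isWeaklyRegular_append_singleton (M : ModuleCat.{u} R) [Module.Finite R M] (n : ℕ)
    [HasInjectiveDimensionLE M n] (hM : ¬ HasInjectiveDimensionLT M n) (rs : List R)
    (mem : ∀ r ∈ rs, r ∈ maximalIdeal R) (reg : IsWeaklyRegular R rs) (hlt : rs.length < n) :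
    ∃ x ∈ maximalIdeal R, IsWeaklyRegular R (rs ++ [x]) := by
  let Q : ModuleCat.{u} R := ModuleCat.of R (R ⧸ Ideal.ofList rs • (⊤ : Submodule R R))
  have projectiveDimension_Q : projectiveDimension Q = rs.length := by
    rw [ModuleCat.projectiveDimension_quotient_eq_add_length_of_isWeaklyRegular
      (ModuleCat.of R R) rs reg mem, ModuleCat.projectiveDimension_eq_zero_of_projective, zero_add]
  have : HasProjectiveDimensionLT Q n := by
    rw [← projectiveDimension_lt_iff, projectiveDimension_Q]
    exact_mod_cast hlt
  have hom_eq_zero : Subsingleton ((R ⧸ maximalIdeal R) →ₗ[R] Q) :=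
    subsingleton_residueField_linearMap_of_subsingleton_ext M Q n hM
      (HasProjectiveDimensionLT.subsingleton Q n n le_rfl M)
  obtain ⟨x, hx, hxQ⟩ := IsSMulRegular.subsingleton_linearMap_iff.1 hom_eq_zero
  rw [Ideal.annihilator_quotient] at hx
  exact ⟨x, hx, (isWeaklyRegular_append_iff R rs [x]).2
    ⟨reg, (isWeaklyRegular_singleton_iff _ x).2 hxQ⟩⟩

lemma exists_isWeaklyRegular_length_eq (M : ModuleCat.{u} R) [Module.Finite R M] (n : ℕ)
    [HasInjectiveDimensionLE M n] (hM : ¬ HasInjectiveDimensionLT M n) {m : ℕ} (hm : m ≤ n) :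
    ∃ rs : List R, rs.length = m ∧ (∀ r ∈ rs, r ∈ maximalIdeal R) ∧ IsWeaklyRegular R rs := by
  induction m with
  | zero => exact ⟨[], rfl, by simp, .nil R R⟩
  | succ m ih =>
    obtain ⟨rs, rfl, mem, reg⟩ := ih (by lia)
    obtain ⟨x, hx, hreg⟩ := exists_isWeaklyRegular_append_singleton M n hM rs mem reg (by lia)
    exact ⟨rs ++ [x], by simp, by simpa [or_imp, forall_and] using ⟨mem, hx⟩, hreg⟩

end IsLocalRing

lemma injDim_le_natCast_iff {R : Type} [CommRing R] (M : ModuleCat R) (n : ℕ) :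
    injDim R M ≤ n ↔ HasInjectiveDimensionLE M n := by
  have ext_iff (N : ModuleCat R) {i : ℕ} (hi : n < i) :
      Subsingleton (extModule R N M i) ↔ Subsingleton (Abelian.Ext N M i) := by
    obtain ⟨j, rfl⟩ := Nat.exists_eq_add_one_of_ne_zero (Nat.ne_zero_of_lt hi)
    rw [← ModuleCat.isZero_iff_subsingleton]
    exact isZero_extFunctor_obj_succ_iff R N M j
  constructor
  · intro hn
    have vanishing : injDim R M ∈ {n : ℕ∞ | ∀ (N : ModuleCat R) (i : ℕ), n < (i : ℕ∞) →
        Subsingleton (extModule R N M i)} :=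
      csInf_mem ⟨⊤, fun _ _ h ↦ absurd h not_top_lt⟩
    refine hasInjectiveDimensionLT_of_enoughProjectives M (n + 1) fun N ↦
      (ext_iff N n.lt_succ_self).1 (vanishing N (n + 1) (hn.trans_lt ?_))
    exact_mod_cast n.lt_succ_self
  · intro _
    refine sInf_le fun N i hi ↦ ?_
    rw [Nat.cast_lt] at hi
    exact (ext_iff N hi).2 (HasInjectiveDimensionLT.subsingleton M (n + 1) i hi N)

lemma injectiveDimension_eq_injDim {R : Type} [CommRing R] (M : ModuleCat R) [Nontrivial M] :
    injectiveDimension M = injDim R M := by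
  refine eq_of_forall_ge_iff fun d ↦ ?_
  induction d with
  | bot => simp [injectiveDimension_eq_bot_iff, ModuleCat.isZero_iff_subsingleton,
      not_subsingleton]
  | coe d =>
    induction d with
    | top => simp
    | coe n =>
      rw [WithBot.coe_le_coe, injDim_le_natCast_iff]
      exact injectiveDimension_le_iff M n

lemma length_le_depth {R : Type} [CommRing R] [IsLocalRing R] (M : Type) [AddCommGroup M]
    [Module R M] [Module.Finite R M] [Nontrivial M] (rs : List R)
    (mem : ∀ r ∈ rs, r ∈ maximalIdeal R) (reg : IsWeaklyRegular M rs) :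
    rs.length ≤ depth R M :=
  le_sSup ⟨rs, rfl, mem, .of_isWeaklyRegular_of_mem_maximalIdeal M mem reg⟩

/-- Bass formula: for a nonzero finitely generated module `M` of finite injective
dimension over a commutative Noetherian local ring `A`, `injdim M = depth A`. -/
theorem stmt8 (A : Type) [CommRing A] [IsNoetherianRing A] [IsLocalRing A]
    (M : Type) [AddCommGroup M] [Module A M] [Module.Finite A M] [Nontrivial M]
    (hfin : injDim A (ModuleCat.of A M) < ⊤) :
    injDim A (ModuleCat.of A M) = depth A A := by
  obtain ⟨n, hn⟩ := ENat.ne_top_iff_exists.1 hfin.ne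
  have injectiveDimension_eq : injectiveDimension (ModuleCat.of A M) = n :=
    (injectiveDimension_eq_injDim _).trans congr($hn.symm)
  have : HasInjectiveDimensionLE (ModuleCat.of A M) n :=
    (injectiveDimension_le_iff _ n).1 injectiveDimension_eq.le
  have not_lt : ¬ HasInjectiveDimensionLT (ModuleCat.of A M) n :=
    (injectiveDimension_ge_iff _ n).1 injectiveDimension_eq.ge
  rw [← hn]
  apply le_antisymm
  · obtain ⟨rs, rfl, mem, reg⟩ := exists_isWeaklyRegular_length_eq _ n not_lt le_rfl
    exact length_le_depth A rs mem reg
  · refine sSup_le ?_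
    rintro _ ⟨rs, rfl, mem, reg⟩
    exact_mod_cast length_le_of_hasInjectiveDimensionLE (ModuleCat.of A M) n rs mem reg.1
end

section
/- Let A be a commutative Noetherian local ring with maximal ideal m and residue field k. Then A is Gorenstein (i.e., injdim_A A < ∞) if and only if Ext^n_A(k, A) ≅ k for n = dim A and Ext^n_A(k, A) = 0 for n ≠ dim A. -/
open CategoryTheory

/-!
Let `Y` be a finite module with `Ext^n(k, Y) = 0` for `n ≥ d`. The vanishing spreads to every
finite module: filter it by cyclic modules `A/p`, and for `p ≠ m` pick `x ∈ m` outside `p`. By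
Noetherian induction `Ext^(n+1)(A/(p + (x)), Y) = 0`, so `x` acts surjectively on the finite module
`Ext^n(A/p, Y)`, which vanishes by Nakayama. By Baer's criterion `Y` then has finite injective
dimension.

Conversely, let `rs` be a maximal `A`-regular sequence in `m`, of length `t`. Then `k` embeds in
`A/(rs)`, which has projective dimension `t`, so `Ext^i(A/(rs), A) → Ext^i(k, A)` is surjective for
`i ≥ injdim A`. Vanishing of the source for `i > t` forces `injdim A ≤ t`, and cyclicity of the
source for `i = t` gives `Ext^t(k, A) ≅ k`. Finally, for a prime `p ≠ m` containing `rs` the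
Nakayama step kills `Ext^t(A/p, A)` as well, so `p` contains a regular sequence of length `t + 1`,
contrary to `Ext^t(k, A) ≠ 0`; hence `A/(rs)` has dimension `0` and `dim A = t`.
-/

namespace Bass

universe u v w

section Comparison

open Abelian
variable {R : Type*} {C : Type u} [Category.{v} C] [Abelian C] [Ring R] [Linear R C] {X Y : C}

section
variable [HasExt.{w} C] (P : ProjectiveResolution X)

lemma smul_extMk (r : R) {n : ℕ} (f : P.complex.X n ⟶ Y) (m : ℕ) (hm : n + 1 = m)
    (hf : P.complex.d m n ≫ f = 0) :
    r • P.extMk f m hm hf = P.extMk (r • f) m hm (by simp [hf]) := by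
  have h := P.extMk_comp_mk₀ f m hm hf (r • 𝟙 Y)
  simpa [Ext.mk₀_smul] using h

lemma extMk_eq_zero_iff_of_degree_zero (f : P.complex.X 0 ⟶ Y) (hf : P.complex.d 1 0 ≫ f = 0) :
    P.extMk f 1 rfl hf = 0 ↔ f = 0 := by
  refine ⟨fun h => ?_, fun h => by subst h; exact P.extMk_zero _ _⟩
  have hP : Limits.IsZero (P.cochainComplex.X 1) :=
    P.cochainComplex.isZero_of_isStrictlyLE 0 1 (by simp)
  rw [← P.extEquivCohomologyClass.apply_eq_iff_eq, P.extEquivCohomologyClass_extMk,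
    P.extEquivCohomologyClass_zero, CochainComplex.HomComplex.CohomologyClass.mk_eq_zero_iff,
    CochainComplex.HomComplex.Cocycle.toSingleMk_mem_coboundaries_iff _ _ _ _ _ 1 (by simp)] at h
  obtain ⟨g, hg⟩ := h
  rw [← cancel_epi (P.cochainComplexXIso (-(0 : ℕ)) 0 rfl).hom, ← hg, hP.eq_of_src g 0]
  simp

lemma extMk_eq_zero_iff_exists_d_prev_comp {n : ℕ} (f : P.complex.X n ⟶ Y)
    (hf : P.complex.d (n + 1) n ≫ f = 0) :
    P.extMk f (n + 1) rfl hf = 0 ↔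
      ∃ g : P.complex.X ((ComplexShape.up ℕ).prev n) ⟶ Y,
        P.complex.d n ((ComplexShape.up ℕ).prev n) ≫ g = f := by
  cases n with
  | zero =>
    rw [extMk_eq_zero_iff_of_degree_zero, P.complex.shape _ _ (by simp)]
    simp [eq_comm]
  | succ p =>
    rw [P.extMk_eq_zero_iff f _ rfl hf p rfl, CochainComplex.prev_nat_succ]

variable (R Y) in
/-- The map sending a degree `n` cocycle of the complex `Hom(P, Y)`, for a projective resolution
`P` of `X`, to its class in `Ext X Y n`. -/
noncomputable def cocycleToExt (n : ℕ) :
    LinearMap.ker ((P.complex.linearYonedaObj R Y).sc' ((ComplexShape.up ℕ).prev n) n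
      (n + 1)).g.hom →ₗ[R] Ext X Y n where
  toFun f := P.extMk f.1 (n + 1) rfl f.2
  map_add' _ _ := (P.add_extMk _ _ _ _ _ _).symm
  map_smul' r _ := (smul_extMk P r _ _ _ _).symm

lemma cocycleToExt_surjective (n : ℕ) : Function.Surjective (cocycleToExt R Y P n) := fun α => by
  obtain ⟨f, hf, rfl⟩ := P.extMk_surjective α (n + 1) rfl
  exact ⟨⟨f, hf⟩, rfl⟩

lemma ker_cocycleToExt (n : ℕ) :
    LinearMap.ker (cocycleToExt R Y P n) =
      LinearMap.range ((P.complex.linearYonedaObj R Y).sc' ((ComplexShape.up ℕ).prev n) n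
        (n + 1)).moduleCatToCycles := by
  ext f
  refine (extMk_eq_zero_iff_exists_d_prev_comp P f.1 f.2).trans ?_
  exact exists_congr fun g => ⟨fun h => Subtype.ext h, fun h => congrArg Subtype.val h⟩
end

/-- Mathlib's two `Ext` modules agree: the left derived functor of `Hom(-, Y)` on the left, shifted
morphisms in the derived category on the right. -/
noncomputable def derivedExtEquiv (R : Type*) [Ring R] {C : Type u} [Category.{v} C] [Abelian C]
    [Linear R C] [EnoughProjectives C] [HasExt.{w} C] (X Y : C) (n : ℕ) :
    ((_root_.Ext R C n).obj (Opposite.op X)).obj Y ≃ₗ[R] Abelian.Ext X Y n :=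
  let P := ProjectiveResolution.of X
  let K := P.complex.linearYonedaObj R Y
  let S := K.sc' ((ComplexShape.up ℕ).prev n) n (n + 1)
  let e : ((_root_.Ext R C n).obj (Opposite.op X)).obj Y ≅ S.moduleCatLeftHomologyData.H :=
    P.isoExt n Y ≪≫ ShortComplex.homologyMapIso (K.isoSc' _ n (n + 1) rfl (by simp)) ≪≫
      S.moduleCatHomologyIso
  e.toLinearEquiv.trans <| (Submodule.quotEquivOfEq _ _ (ker_cocycleToExt P n).symm).trans <|
    (cocycleToExt R Y P n).quotKerEquivOfSurjective (cocycleToExt_surjective P n)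

section
variable {R : Type} [CommRing R]

lemma nonempty_extModule_linearEquiv_iff (M N : ModuleCat.{0} R) (n : ℕ) {L : Type v}
    [AddCommGroup L] [Module R L] :
    Nonempty (extModule R M N n ≃ₗ[R] L) ↔ Nonempty (Abelian.Ext M N n ≃ₗ[R] L) :=
  ⟨fun ⟨e⟩ => ⟨(derivedExtEquiv R M N n).symm.trans e⟩,
    fun ⟨e⟩ => ⟨(derivedExtEquiv R M N n).trans e⟩⟩

lemma subsingleton_extModule_iff (M N : ModuleCat.{0} R) (n : ℕ) :
    Subsingleton (extModule R M N n) ↔ Subsingleton (Abelian.Ext M N n) :=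
  (derivedExtEquiv R M N n).toEquiv.subsingleton_congr

lemma injDim_lt_top_iff (M : ModuleCat.{0} R) : injDim R M < ⊤ ↔ injectiveDimension M ≠ ⊤ := by
  rw [injectiveDimension_ne_top_iff, injDim, sInf_lt_iff]
  constructor
  · rintro ⟨n, hn, hlt⟩
    lift n to ℕ using hlt.ne
    refine ⟨n, (hasInjectiveDimensionLT_iff M (n + 1)).mpr fun i hi N e => ?_⟩
    have := (subsingleton_extModule_iff N M i).mp (hn N i (by exact_mod_cast hi))
    exact Subsingleton.elim e 0
  · rintro ⟨n, _⟩
    refine ⟨n, fun N i hi => (subsingleton_extModule_iff N M i).mpr ?_, ENat.natCast_lt_top n⟩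
    exact HasInjectiveDimensionLT.subsingleton M (n + 1) i (by exact_mod_cast hi) N
end

end Comparison

section LongExactSequence

open Abelian

variable {C : Type u} [Category.{v} C] [Abelian C] [HasExt.{w} C]

lemma subsingleton_ext_of_isZero {X : C} (hX : Limits.IsZero X) (Y : C) (n : ℕ) :
    Subsingleton (Ext X Y n) :=
  have := hX.hasProjectiveDimensionLT_zero
  HasProjectiveDimensionLT.subsingleton X 0 n n.zero_le Y

lemma subsingleton_ext_congr {X X' : C} (e : X ≅ X') (Y : C) (n : ℕ) :
    Subsingleton (Ext X Y n) ↔ Subsingleton (Ext X' Y n) :=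
  ((extFunctor n).mapIso e.op).app Y |>.addCommGroupIsoToAddEquiv.symm.toEquiv.subsingleton_congr

section
variable {S : ShortComplex C} (hS : S.ShortExact) (Y : C)
include hS

lemma exists_mk₀_comp_eq_of_subsingleton_ext {n : ℕ} (h : Subsingleton (Ext S.X₃ Y (n + 1)))
    (α : Ext S.X₁ Y n) : ∃ β : Ext S.X₂ Y n, (Ext.mk₀ S.f).comp β (zero_add n) = α :=
  Ext.contravariant_sequence_exact₁ hS Y α (add_comm 1 n) (h.elim _ _)

lemma subsingleton_ext_X₂ {n : ℕ} (h₁ : Subsingleton (Ext S.X₁ Y n))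
    (h₃ : Subsingleton (Ext S.X₃ Y n)) : Subsingleton (Ext S.X₂ Y n) := by
  refine subsingleton_of_forall_eq 0 fun α => ?_
  obtain ⟨β, rfl⟩ := Ext.contravariant_sequence_exact₂ hS Y α (h₁.elim _ _)
  rw [h₃.elim β 0, Ext.comp_zero]

end

lemma mk₀_comp_surjective_of_mono {X Q : C} (f : X ⟶ Q) [Mono f] (Y : C) (n : ℕ)
    [HasInjectiveDimensionLE Y n] :
    Function.Surjective fun β : Ext Q Y n => (Ext.mk₀ f).comp β (zero_add n) := by
  have hS : (ShortComplex.mk f (Limits.cokernel.π f) (Limits.cokernel.condition f)).ShortExact :=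
    { exact := ShortComplex.exact_cokernel f }
  exact exists_mk₀_comp_eq_of_subsingleton_ext hS Y
    (HasInjectiveDimensionLT.subsingleton Y (n + 1) (n + 1) le_rfl _)

end LongExactSequence

section Nakayama

open Abelian IsLocalRing
open scoped Pointwise

variable {A : Type u} [CommRing A] [Small.{v} A]

lemma smul_eq_mk₀_smul_id_comp {N Y : ModuleCat.{v} A} {n : ℕ} (x : A) (α : Ext N Y n) :
    x • α = (Ext.mk₀ (x • 𝟙 N)).comp α (zero_add n) := by
  rw [Ext.mk₀_smul, Ext.smul_comp, Ext.mk₀_id_comp]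

lemma annihilator_le_annihilator_ext (N Y : ModuleCat.{v} A) (n : ℕ) :
    Module.annihilator A N ≤ Module.annihilator A (Ext N Y n) := by
  refine fun x hx => Module.mem_annihilator.mpr fun α => ?_
  have hx0 : x • 𝟙 N = 0 := by
    ext y
    exact Module.mem_annihilator.mp hx y
  rw [smul_eq_mk₀_smul_id_comp, hx0, Ext.mk₀_zero, Ext.zero_comp]

lemma smul_surjective_ext {N Y : ModuleCat.{v} A} {x : A} (hx : IsSMulRegular N x) {n : ℕ}
    (h : Subsingleton (Ext (ModuleCat.of A (QuotSMulTop x N)) Y (n + 1))) :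
    Function.Surjective fun α : Ext N Y n => x • α := fun α => by
  obtain ⟨β, hβ⟩ :=
    exists_mk₀_comp_eq_of_subsingleton_ext hx.smulShortComplex_shortExact Y h α
  exact ⟨β, (smul_eq_mk₀_smul_id_comp x β).trans hβ⟩

lemma subsingleton_ext_of_quotSMulTop [IsNoetherianRing A] [IsLocalRing A]
    {N Y : ModuleCat.{v} A} [Module.Finite A N] [Module.Finite A Y] {x : A}
    (hxm : x ∈ maximalIdeal A) (hx : IsSMulRegular N x) {n : ℕ}
    (h : Subsingleton (Ext (ModuleCat.of A (QuotSMulTop x N)) Y (n + 1))) :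
    Subsingleton (Ext N Y n) := by
  by_contra! _
  refine Submodule.top_ne_pointwise_smul_of_mem_jacobson_annihilator (M := Ext N Y n)
    (maximalIdeal_le_jacobson _ hxm) (eq_top_iff.mpr fun α _ => ?_).symm
  obtain ⟨β, hβ⟩ := smul_surjective_ext hx h α
  exact (Submodule.mem_smul_pointwise_iff_exists _ _ _).mpr ⟨β, trivial, hβ⟩

end Nakayama

section Devissage

open IsLocalRing
variable {A : Type u} [CommRing A]

lemma annihilator_sup_span_singleton_le_annihilator_quotSMulTop (x : A) (N : Type v)
    [AddCommGroup N] [Module A N] :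
    Module.annihilator A N ⊔ Ideal.span {x} ≤ Module.annihilator A (QuotSMulTop x N) :=
  sup_le (LinearMap.annihilator_le_of_surjective _ (Submodule.mkQ_surjective _))
    ((Ideal.span_singleton_le_iff_mem _).mpr (QuotSMulTop.mem_annihilator _ _))

lemma isSMulRegular_quotient_of_notMem (p : Ideal A) [hp : p.IsPrime] {x : A} (hx : x ∉ p) :
    IsSMulRegular (A ⧸ p) x :=
  (isSMulRegular_quotient_iff_mem_of_smul_mem p x).mpr fun _ h => (hp.mem_or_mem h).resolve_left hx

theorem induction_on_residueField [IsNoetherianRing A] [IsLocalRing A]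
    {motive : ModuleCat.{v} A → Prop}
    (subsingleton : ∀ N : ModuleCat.{v} A, Subsingleton N → motive N)
    (residueField : ∀ N : ModuleCat.{v} A, (N ≃ₗ[A] ResidueField A) → motive N)
    (quotSMulTop : ∀ (N : ModuleCat.{v} A) [Module.Finite A N], ∀ x ∈ maximalIdeal A,
      IsSMulRegular N x → motive (ModuleCat.of A (QuotSMulTop x N)) → motive N)
    (shortExact : ∀ S : ShortComplex (ModuleCat.{v} A), S.ShortExact →
      motive S.X₁ → motive S.X₃ → motive S.X₂)
    (N : ModuleCat.{v} A) [Module.Finite A N] : motive N := by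
  suffices h : ∀ (I : Ideal A) (N : Type v) [AddCommGroup N] [Module A N] [Module.Finite A N],
      I ≤ Module.annihilator A N → motive (ModuleCat.of A N) from h ⊥ N bot_le
  intro I
  induction I using WellFoundedGT.induction with
  | _ I ih =>
  intro N _ _ hN
  induction hN using IsNoetherianRing.induction_on_isQuotientEquivQuotientPrime A with
  | subsingleton N => exact fun _ => subsingleton _ ‹_›
  | quotient N p e =>
    intro hI
    have hann : Module.annihilator A N = p.1 := e.annihilator_eq.trans Ideal.annihilator_quotient
    by_cases hp : maximalIdeal A ≤ p.1
    · have hpm : p.1 = maximalIdeal A := ((maximalIdeal.isMaximal A).eq_of_le p.2.ne_top hp).symm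
      exact residueField _ (e.trans (Submodule.quotEquivOfEq _ _ hpm))
    · obtain ⟨x, hxm, hxp⟩ := SetLike.not_le_iff_exists.mp hp
      have hx : IsSMulRegular N x :=
        (e.isSMulRegular_congr x).mpr (isSMulRegular_quotient_of_notMem p.1 hxp)
      have hlt : I < Module.annihilator A N ⊔ Ideal.span {x} :=
        hI.trans_lt (left_lt_sup.mpr fun h => hxp (hann ▸ h (Ideal.mem_span_singleton_self x)))
      exact quotSMulTop _ x hxm hx
        (ih _ hlt _ (annihilator_sup_span_singleton_le_annihilator_quotSMulTop x N))
  | exact N₁ N₂ N₃ f g hf hg hfg h₁ h₃ =>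
    exact fun hI => shortExact _ (ModuleCat.shortComplex_shortExact
      (ModuleCat.shortComplexOfCompEqZero f g hfg.linearMap_comp_eq_zero) hfg hf hg)
      (h₁ (hI.trans (LinearMap.annihilator_le_of_injective f hf)))
      (h₃ (hI.trans (LinearMap.annihilator_le_of_surjective g hg)))

end Devissage

section InjectiveDimension

open Abelian IsLocalRing
variable {A : Type u} [CommRing A]

lemma injective_of_subsingleton_ext_one (Y : ModuleCat.{u} A)
    (h : ∀ I : Ideal A, Subsingleton (Ext (ModuleCat.of A (A ⧸ I)) Y 1)) : Injective Y := by
  rw [← Module.injective_iff_injective_object, ← Module.Baer.iff_injective]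
  intro I g
  have hS := ModuleCat.shortComplex_shortExact
    (ModuleCat.shortComplexOfCompEqZero I.subtype I.mkQ
      (LinearMap.exact_subtype_mkQ I).linearMap_comp_eq_zero) (LinearMap.exact_subtype_mkQ I)
      I.subtype_injective I.mkQ_surjective
  obtain ⟨β, hβ⟩ := exists_mk₀_comp_eq_of_subsingleton_ext hS Y (h I)
    (Ext.mk₀ (ModuleCat.ofHom g : ModuleCat.of A I ⟶ Y))
  obtain ⟨f, rfl⟩ := (Ext.mk₀_bijective _ _).2 β
  rw [Ext.mk₀_comp_mk₀, (Ext.mk₀_bijective _ _).1.eq_iff] at hβ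
  exact ⟨f.hom, fun x hx => congrArg (fun φ : ModuleCat.of A I ⟶ Y => φ.hom ⟨x, hx⟩) hβ⟩

lemma hasInjectiveDimensionLE_of_subsingleton_ext (d : ℕ) (Y : ModuleCat.{u} A)
    (h : ∀ I : Ideal A, Subsingleton (Ext (ModuleCat.of A (A ⧸ I)) Y (d + 1))) :
    HasInjectiveDimensionLE Y d := by
  induction d generalizing Y with
  | zero =>
    exact injective_iff_hasInjectiveDimensionLT_one.mp (injective_of_subsingleton_ext_one Y h)
  | succ d ih =>
    obtain ⟨J, hJ, f, _⟩ := EnoughInjectives.presentation Y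
    let S := ShortComplex.mk f (Limits.cokernel.π f) (Limits.cokernel.condition f)
    have hS : S.ShortExact := { exact := ShortComplex.exact_cokernel f }
    have : Injective S.X₂ := hJ
    refine (hS.hasInjectiveDimensionLT_X₃_iff d hJ).mp (ih S.X₃ fun I => ?_)
    refine subsingleton_of_forall_eq 0 fun α => ?_
    obtain ⟨β, rfl⟩ := Ext.covariant_sequence_exact₃ _ hS α rfl ((h I).elim _ _)
    rw [Ext.eq_zero_of_injective β, Ext.zero_comp]

variable [IsNoetherianRing A] [IsLocalRing A]

theorem subsingleton_ext_of_residueField (Y : ModuleCat.{u} A) [Module.Finite A Y] (d : ℕ)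
    (h : ∀ n ≥ d, Subsingleton (Ext (ModuleCat.of A (ResidueField A)) Y n))
    (N : ModuleCat.{u} A) [Module.Finite A N] : ∀ n ≥ d, Subsingleton (Ext N Y n) := by
  induction N using induction_on_residueField with
  | subsingleton N hN =>
    exact fun n _ => subsingleton_ext_of_isZero (ModuleCat.isZero_of_subsingleton N) Y n
  | residueField N e =>
    exact fun n hn => (subsingleton_ext_congr e.toModuleIso Y n).mpr (h n hn)
  | quotSMulTop N x hxm hx hN =>
    exact fun n hn => subsingleton_ext_of_quotSMulTop hxm hx (hN (n + 1) (by omega))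
  | shortExact S hS h₁ h₃ =>
    exact fun n hn => subsingleton_ext_X₂ hS Y (h₁ n hn) (h₃ n hn)

theorem hasInjectiveDimensionLE_of_subsingleton_ext_residueField (Y : ModuleCat.{u} A)
    [Module.Finite A Y] (d : ℕ)
    (h : ∀ n > d, Subsingleton (Ext (ModuleCat.of A (ResidueField A)) Y n)) :
    HasInjectiveDimensionLE Y d :=
  hasInjectiveDimensionLE_of_subsingleton_ext d Y fun I =>
    subsingleton_ext_of_residueField Y (d + 1) h (ModuleCat.of A (A ⧸ I)) (d + 1) le_rfl

end InjectiveDimension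

section Depth

open Abelian IsLocalRing RingTheory.Sequence

variable {A : Type u} [CommRing A] [IsLocalRing A]

lemma ideal_smul_top_lt_top {I : Ideal A} (hI : I ≠ ⊤) (M : Type v) [AddCommGroup M] [Module A M]
    [Module.Finite A M] [Nontrivial M] : I • (⊤ : Submodule A M) < ⊤ :=
  lt_top_iff_ne_top.mpr (Submodule.top_ne_ideal_smul_of_le_jacobson_annihilator
    ((le_maximalIdeal hI).trans (maximalIdeal_le_jacobson _))).symm

variable [IsNoetherianRing A] (Y : ModuleCat.{u} A) [Module.Finite A Y] [Nontrivial Y]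

lemma exists_isRegular_iff_subsingleton_ext {I : Ideal A} (hI : I ≠ ⊤) (n : ℕ) :
    (∃ rs : List A, rs.length = n ∧ (∀ r ∈ rs, r ∈ I) ∧ IsRegular Y rs) ↔
      ∀ i < n, Subsingleton (Ext (ModuleCat.of A (A ⧸ I)) Y i) := by
  refine ((ModuleCat.exists_isRegular_tfae I n Y (ideal_smul_top_lt_top hI Y)).out 3 1).trans ?_
  exact forall₂_congr fun i _ =>
    subsingleton_ext_congr (Shrink.linearEquiv A (A ⧸ I)).toModuleIso Y i

lemma exists_nontrivial_ext_residueField :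
    ∃ n, Nontrivial (Ext (ModuleCat.of A (ResidueField A)) Y n) := by
  by_contra! h
  have h0 := subsingleton_ext_of_residueField Y 0 (fun n _ => h n) Y 0 le_rfl
  have : Subsingleton (Y ⟶ Y) := Ext.addEquiv₀.symm.subsingleton
  have : Subsingleton Y := ModuleCat.subsingleton_of_isZero
    ((Limits.IsZero.iff_id_eq_zero Y).mpr (Subsingleton.elim _ _))
  exact not_subsingleton Y this

variable {Y}

lemma length_le_of_nontrivial_ext {t : ℕ} [Nontrivial (Ext (ModuleCat.of A (ResidueField A)) Y t)]
    {rs : List A} (hm : ∀ r ∈ rs, r ∈ maximalIdeal A) (hrs : IsRegular Y rs) : rs.length ≤ t := by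
  by_contra! ht
  exact not_subsingleton (Ext (ModuleCat.of A (ResidueField A)) Y t) <|
    (exists_isRegular_iff_subsingleton_ext Y (maximalIdeal.isMaximal A).ne_top rs.length).mp
      ⟨rs, rfl, hm, hrs⟩ t ht

variable (Y) in
lemma exists_isRegular_nontrivial_ext :
    ∃ rs : List A, (∀ r ∈ rs, r ∈ maximalIdeal A) ∧ IsRegular Y rs ∧
      Nontrivial (Ext (ModuleCat.of A (ResidueField A)) Y rs.length) := by
  classical
  have h := exists_nontrivial_ext_residueField Y
  obtain ⟨rs, hlen, hm, hrs⟩ :=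
    (exists_isRegular_iff_subsingleton_ext Y (maximalIdeal.isMaximal A).ne_top (Nat.find h)).mpr
      fun i hi => not_nontrivial_iff_subsingleton.mp (Nat.find_min h hi)
  exact ⟨rs, hm, hrs, hlen ▸ Nat.find_spec h⟩

lemma not_isSMulRegular_quotient_of_nontrivial_ext {rs : List A}
    (hm : ∀ r ∈ rs, r ∈ maximalIdeal A) (hrs : IsRegular Y rs)
    [Nontrivial (Ext (ModuleCat.of A (ResidueField A)) Y rs.length)]
    {x : A} (hx : x ∈ maximalIdeal A) :
    ¬ IsSMulRegular (Y ⧸ (Ideal.ofList rs • ⊤ : Submodule A Y)) x := by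
  intro hreg
  have hm' : ∀ r ∈ rs ++ [x], r ∈ maximalIdeal A := by
    simpa [or_imp, forall_and] using ⟨hm, hx⟩
  have hrs' : IsRegular Y (rs ++ [x]) :=
    (isRegular_iff_isWeaklyRegular_of_subset_maximalIdeal hm').mpr <|
      (isWeaklyRegular_append_iff _ _ _).mpr
        ⟨hrs.toIsWeaklyRegular, (isWeaklyRegular_singleton_iff _ _).mpr hreg⟩
  have := length_le_of_nontrivial_ext (t := rs.length) hm' hrs'
  simp at this

lemma exists_injective_residueField_linearMap_quotient {rs : List A}
    (hm : ∀ r ∈ rs, r ∈ maximalIdeal A) (hrs : IsRegular Y rs)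
    [Nontrivial (Ext (ModuleCat.of A (ResidueField A)) Y rs.length)] :
    ∃ g : ResidueField A →ₗ[A] Y ⧸ (Ideal.ofList rs • ⊤ : Submodule A Y),
      Function.Injective g := by
  have : Nontrivial (ResidueField A →ₗ[A] Y ⧸ (Ideal.ofList rs • ⊤ : Submodule A Y)) := by
    rw [← not_subsingleton_iff_nontrivial, IsSMulRegular.subsingleton_linearMap_iff]
    rintro ⟨x, hx, hreg⟩
    exact not_isSMulRegular_quotient_of_nontrivial_ext hm hrs
      (Ideal.annihilator_quotient.le hx) hreg
  obtain ⟨g, hg⟩ := exists_ne (0 : ResidueField A →ₗ[A] Y ⧸ (Ideal.ofList rs • ⊤ : Submodule A Y))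
  have : IsSimpleModule A (ResidueField A) :=
    isSimpleModule_iff_isCoatom.mpr (maximalIdeal.isMaximal A).out
  exact ⟨g, (LinearMap.injective_or_eq_zero g).resolve_right hg⟩

lemma maximalIdeal_le_of_forall_mem {rs : List A} (hrs : IsRegular Y rs)
    [Nontrivial (Ext (ModuleCat.of A (ResidueField A)) Y rs.length)]
    [HasInjectiveDimensionLE Y rs.length] {p : Ideal A} [hp : p.IsPrime]
    (hrsp : ∀ r ∈ rs, r ∈ p) : maximalIdeal A ≤ p := by
  by_contra h
  obtain ⟨x, hxm, hxp⟩ := SetLike.not_le_iff_exists.mp h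
  have hlow :=
    (exists_isRegular_iff_subsingleton_ext Y hp.ne_top rs.length).mp ⟨rs, rfl, hrsp, hrs⟩
  have htop : Subsingleton (Ext (ModuleCat.of A (A ⧸ p)) Y rs.length) :=
    subsingleton_ext_of_quotSMulTop (N := ModuleCat.of A (A ⧸ p)) hxm
      (isSMulRegular_quotient_of_notMem p hxp)
      (HasInjectiveDimensionLT.subsingleton Y (rs.length + 1) _ le_rfl _)
  obtain ⟨ys, hlen, hyp, hys⟩ :=
    (exists_isRegular_iff_subsingleton_ext Y hp.ne_top (rs.length + 1)).mpr fun i hi =>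
      (Nat.lt_succ_iff_lt_or_eq.mp hi).elim (hlow i) fun h => h ▸ htop
  have := length_le_of_nontrivial_ext (t := rs.length)
    (fun y hy => le_maximalIdeal hp.ne_top (hyp y hy)) hys
  omega

end Depth

section RegularSequence

open Abelian RingTheory.Sequence

lemma isPrincipal_ext_self_zero (A : Type u) [CommRing A] :
    Module.IsPrincipal A (Ext (ModuleCat.of A A) (ModuleCat.of A A) 0) :=
  (Ext.linearEquiv₀ (R := A) ≪≫ₗ ModuleCat.homLinearEquiv (S := A) ≪≫ₗ
    LinearMap.ringLmapEquivSelf A A A).isPrincipal_iff.mpr inferInstance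

variable {A : Type u} [CommRing A] [Small.{v} A]

lemma isPrincipal_ext_X₃ {S : ShortComplex (ModuleCat.{v} A)} (hS : S.ShortExact)
    (Y : ModuleCat.{v} A) {n : ℕ} (h₁ : Module.IsPrincipal A (Ext S.X₁ Y n))
    (h₂ : Subsingleton (Ext S.X₂ Y (n + 1))) : Module.IsPrincipal A (Ext S.X₃ Y (n + 1)) :=
  have := h₁
  .of_surjective (hS.extClass.precompOfLinear A Y (add_comm 1 n)) fun α =>
    Ext.contravariant_sequence_exact₃ hS Y α (h₂.elim _ _) (add_comm 1 n)

lemma isPrincipal_ext_of_iso {X X' : ModuleCat.{v} A} (e : X ≅ X') (Y : ModuleCat.{v} A) (n : ℕ)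
    [Module.IsPrincipal A (Ext X Y n)] : Module.IsPrincipal A (Ext X' Y n) :=
  .of_surjective ((Ext.mk₀ e.inv).precompOfLinear A Y (zero_add n)) fun α =>
    ⟨(Ext.mk₀ e.hom).comp α (zero_add n), by simp⟩

lemma isPrincipal_ext_quotient_ofList_smul_top (Y : ModuleCat.{v} A) {rs : List A}
    {M : ModuleCat.{v} A} (hrs : IsWeaklyRegular M rs) (j : ℕ) [HasProjectiveDimensionLE M j]
    [Module.IsPrincipal A (Ext M Y j)] :
    Module.IsPrincipal A
      (Ext (ModuleCat.of A (M ⧸ (Ideal.ofList rs • ⊤ : Submodule A M))) Y (j + rs.length)) := by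
  induction rs generalizing M j with
  | nil =>
    exact isPrincipal_ext_of_iso (Submodule.quotEquivOfEqBot _ (by simp)).symm.toModuleIso Y j
  | cons x rs ih =>
    obtain ⟨hx, hrs⟩ := (isWeaklyRegular_cons_iff M x rs).mp hrs
    have hS := hx.smulShortComplex_shortExact
    have : HasProjectiveDimensionLE (ModuleCat.of A (QuotSMulTop x M)) (j + 1) :=
      hS.hasProjectiveDimensionLT_X₃ (j + 1) ‹_›
        (hasProjectiveDimensionLT_of_ge M (j + 1) _ (by simp))
    have : Module.IsPrincipal A (Ext (ModuleCat.of A (QuotSMulTop x M)) Y (j + 1)) :=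
      isPrincipal_ext_X₃ hS Y ‹_›
        (HasProjectiveDimensionLT.subsingleton M (j + 1) (j + 1) le_rfl Y)
    have := ih (M := ModuleCat.of A (QuotSMulTop x M)) hrs (j + 1)
    rw [List.length_cons, add_comm rs.length, ← add_assoc]
    exact isPrincipal_ext_of_iso
      (Submodule.quotOfListConsSMulTopEquivQuotSMulTopInner M x rs).symm.toModuleIso Y _

end RegularSequence

section GorensteinLocal

open Abelian IsLocalRing RingTheory.Sequence

variable {A : Type u} [CommRing A] [IsLocalRing A]

lemma nonempty_linearEquiv_residueField (M : Type v) [AddCommGroup M] [Module A M]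
    [Nontrivial M] [Module.IsPrincipal A M] (hM : maximalIdeal A ≤ Module.annihilator A M) :
    Nonempty (M ≃ₗ[A] ResidueField A) := by
  obtain ⟨y, hy⟩ := Submodule.IsPrincipal.principal (⊤ : Submodule A M)
  let F := LinearMap.toSpanSingleton A M y
  have hF : Function.Surjective F := by
    rw [← LinearMap.range_eq_top, LinearMap.range_toSpanSingleton, hy]
  have hne : LinearMap.ker F ≠ ⊤ := fun h => bot_ne_top (α := Submodule A M) <| by
    rw [← LinearMap.range_eq_top.mpr hF, LinearMap.ker_eq_top.mp h, LinearMap.range_zero]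
  have hker : LinearMap.ker F = maximalIdeal A :=
    ((maximalIdeal.isMaximal A).eq_of_le hne fun a ha =>
      Module.mem_annihilator.mp (hM ha) y).symm
  exact ⟨(F.quotKerEquivOfSurjective hF).symm.trans (Submodule.quotEquivOfEq _ _ hker)⟩

theorem nonempty_ext_residueField_linearEquiv {rs : List A}
    (hrs : IsWeaklyRegular A rs)
    [Nontrivial (Ext (ModuleCat.of A (ResidueField A)) (ModuleCat.of A A) rs.length)]
    [HasInjectiveDimensionLE (ModuleCat.of A A) rs.length]
    (f : ModuleCat.of A (ResidueField A) ⟶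
      ModuleCat.of A (A ⧸ (Ideal.ofList rs • ⊤ : Submodule A A))) [Mono f] :
    Nonempty (Ext (ModuleCat.of A (ResidueField A)) (ModuleCat.of A A) rs.length ≃ₗ[A]
      ResidueField A) := by
  have := isPrincipal_ext_self_zero A
  have hQ := isPrincipal_ext_quotient_ofList_smul_top (ModuleCat.of A A) (M := ModuleCat.of A A)
    hrs 0
  rw [zero_add] at hQ
  have : Module.IsPrincipal A
      (Ext (ModuleCat.of A (ResidueField A)) (ModuleCat.of A A) rs.length) :=
    .of_surjective ((Ext.mk₀ f).precompOfLinear A _ (zero_add _))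
      (mk₀_comp_surjective_of_mono f _ _)
  exact nonempty_linearEquiv_residueField _
    (Ideal.annihilator_quotient.ge.trans
      (annihilator_le_annihilator_ext (ModuleCat.of A (ResidueField A)) _ _))

variable [IsNoetherianRing A]

lemma hasInjectiveDimensionLE_of_mono_residueField {Y Q : ModuleCat.{u} A} [Module.Finite A Y]
    (f : ModuleCat.of A (ResidueField A) ⟶ Q) [Mono f] (t : ℕ) [HasProjectiveDimensionLE Q t]
    (n : ℕ) (h : HasInjectiveDimensionLE Y n) : HasInjectiveDimensionLE Y t := by
  induction n with
  | zero => exact hasInjectiveDimensionLT_of_ge Y 1 (t + 1) (by omega)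
  | succ n ih =>
    obtain hnt | htn := Nat.lt_or_ge n t
    · exact hasInjectiveDimensionLT_of_ge Y (n + 1 + 1) (t + 1) (by omega)
    · refine ih (hasInjectiveDimensionLE_of_subsingleton_ext_residueField Y n fun i hi => ?_)
      have : HasInjectiveDimensionLE Y i :=
        hasInjectiveDimensionLT_of_ge Y (n + 1 + 1) (i + 1) (by omega)
      have : Subsingleton (Ext Q Y i) :=
        HasProjectiveDimensionLT.subsingleton Q (t + 1) i (by omega) Y
      exact (mk₀_comp_surjective_of_mono f Y i).subsingleton

lemma hasProjectiveDimensionLE_quotient_ofList_smul_top {rs : List A}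
    (hm : ∀ r ∈ rs, r ∈ maximalIdeal A) (hrs : IsWeaklyRegular A rs) :
    HasProjectiveDimensionLE (ModuleCat.of A (A ⧸ (Ideal.ofList rs • ⊤ : Submodule A A)))
      rs.length := by
  rw [← projectiveDimension_le_iff]
  refine (ModuleCat.projectiveDimension_quotient_eq_add_length_of_isWeaklyRegular
    (ModuleCat.of A A) rs hrs hm).le.trans ?_
  rw [ModuleCat.projectiveDimension_eq_zero_of_projective, zero_add]

lemma ringKrullDim_eq_length_of_isRegular {rs : List A}
    (hm : ∀ r ∈ rs, r ∈ maximalIdeal A) (hrs : IsRegular A rs)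
    (hp : ∀ p : Ideal A, p.IsPrime → (∀ r ∈ rs, r ∈ p) → maximalIdeal A ≤ p) :
    ringKrullDim A = rs.length := by
  have hzero : PrimeSpectrum.zeroLocus (Ideal.ofList rs : Set A) = {closedPoint A} := by
    ext p
    rw [PrimeSpectrum.mem_zeroLocus, SetLike.coe_subset_coe, Ideal.ofList, Ideal.span_le,
      Set.mem_singleton_iff]
    refine ⟨fun h => PrimeSpectrum.ext ?_, fun h => h ▸ hm⟩
    exact ((maximalIdeal.isMaximal A).eq_of_le p.2.ne_top (hp p.asIdeal p.2 h)).symm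
  rw [← ringKrullDim_add_length_eq_ringKrullDim_of_isRegular rs hrs, ringKrullDim_quotient, hzero,
    Order.krullDim_eq_zero_of_unique, zero_add]

end GorensteinLocal

end Bass

open Bass Abelian IsLocalRing in
theorem stmt12_general (A : Type u) [CommRing A] [IsNoetherianRing A] [IsLocalRing A] :
    injectiveDimension (ModuleCat.of A A) ≠ ⊤ ↔
      ∃ d : ℕ, ringKrullDim A = d ∧
        Nonempty (Ext (ModuleCat.of A (ResidueField A)) (ModuleCat.of A A) d ≃ₗ[A]
          ResidueField A) ∧
        ∀ n ≠ d, Subsingleton (Ext (ModuleCat.of A (ResidueField A)) (ModuleCat.of A A) n) := by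
  rw [injectiveDimension_ne_top_iff]
  constructor
  · rintro ⟨n, hn⟩
    obtain ⟨rs, hm, hrs, hnt⟩ := exists_isRegular_nontrivial_ext (ModuleCat.of A A)
    obtain ⟨g, hg⟩ := exists_injective_residueField_linearMap_quotient hm hrs
    have : Mono (ModuleCat.ofHom g) := (ModuleCat.mono_iff_injective _).mpr hg
    have := hasProjectiveDimensionLE_quotient_ofList_smul_top hm hrs.toIsWeaklyRegular
    have := hasInjectiveDimensionLE_of_mono_residueField (ModuleCat.ofHom g) rs.length n hn
    refine ⟨rs.length,
      ringKrullDim_eq_length_of_isRegular hm hrs fun p hp => maximalIdeal_le_of_forall_mem hrs,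
      nonempty_ext_residueField_linearEquiv hrs.toIsWeaklyRegular (ModuleCat.ofHom g),
      fun i hi => ?_⟩
    obtain h | h := lt_or_gt_of_ne hi
    · exact (exists_isRegular_iff_subsingleton_ext (ModuleCat.of A A)
        (maximalIdeal.isMaximal A).ne_top rs.length).mp ⟨rs, rfl, hm, hrs⟩ i h
    · exact HasInjectiveDimensionLT.subsingleton _ (rs.length + 1) i h _
  · rintro ⟨d, -, -, h⟩
    exact ⟨d, hasInjectiveDimensionLE_of_subsingleton_ext_residueField _ d fun n hn => h n hn.ne'⟩

/-- Bass's characterization of Gorenstein local rings: `A` is Gorenstein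
(`injdim_A A < ∞`) iff `Ext^n_A(k, A) ≅ k` for `n = dim A` and
`Ext^n_A(k, A) = 0` for `n ≠ dim A`. -/
theorem stmt12 (A : Type) [CommRing A] [IsNoetherianRing A] [IsLocalRing A] :
    injDim A (ModuleCat.of A A) < ⊤ ↔
      ∃ d : ℕ, ringKrullDim A = (d : WithBot ℕ∞) ∧
        Nonempty ((extModule A (ModuleCat.of A (IsLocalRing.ResidueField A))
          (ModuleCat.of A A) d) ≃ₗ[A] IsLocalRing.ResidueField A) ∧
        ∀ n : ℕ, n ≠ d → Subsingleton (extModule A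
          (ModuleCat.of A (IsLocalRing.ResidueField A)) (ModuleCat.of A A) n) := by
  simp only [Bass.injDim_lt_top_iff, Bass.nonempty_extModule_linearEquiv_iff,
    Bass.subsingleton_extModule_iff]
  exact stmt12_general A
end
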